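/- arXiv:2511.09493 — 4 statements merged into one kernel-verified Lean document; each statement's English description precedes it below -/
import Mathlib

section
/- Let k ≥ s ≥ 1 be integers with s > k/2, let p_1, …, p_k be probability distributions on Y, and let S ⊆ {1,…,k} with |S| = s and Δ(S) > 0. For y ∈ Y let d(y) be the ⌈k/2⌉-th smallest of the k values p_1(y), …, p_k(y), and let D := Σ_{y∈Y} d(y). Then D ≥ Δ(S) > 0, so the median distribution p_med(y) := d(y)/D is a well-defined probability distribution on Y, and for every subset U ⊆ Y it satisfies p_med(U) ≤ (1/Δ(S)) · Σ_{i∈S} p_i(U). -/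
/-!
Since `|S| > k/2`, the set `S` contains both an index whose rank is at most `⌈k/2⌉` and an index
whose rank is at least `⌈k/2⌉`. Hence, pointwise in `y`, the median `d(y)` lies between the minimum
and the maximum of `p_i(y)`, `i ∈ S` (`exists_mem_le_orderStat`, `exists_mem_orderStat_le`).
Summing the lower bound over `Y` gives `D ≥ Δ(S)`. Bounding the maximum by `Σ_{i ∈ S} p_i(y)` gives
summability of `d` and `d(U) ≤ Σ_{i ∈ S} p_i(U)`; dividing by `D ≥ Δ(S) > 0` gives the claim.
-/

open scoped BigOperators

/-- probability that a distribution `p` on `Y` assigns to a set `U ⊆ Y`. -/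
noncomputable def probOf {Y : Type*} (p : Y → ℝ) (U : Set Y) : ℝ := ∑' y : U, p (y : Y)

/-- `p` is a probability distribution: nonnegative and summing to 1. -/
def IsDist {α : Type*} (p : α → ℝ) : Prop := (∀ a, 0 ≤ p a) ∧ HasSum p 1

/-- overlap `Δ(J) = Σ_y min_{i ∈ J} p_i(y)` of the distributions indexed by `J`. -/
noncomputable def overlap {Y : Type*} {k : ℕ} (p : Fin k → Y → ℝ) (J : Finset (Fin k)) : ℝ :=
  ∑' y : Y, sInf {v : ℝ | ∃ i ∈ J, v = p i y}

/-- the `m`-th smallest of the values `a 1, …, a k` (with `m` counted from 1). -/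
noncomputable def orderStat {k : ℕ} (a : Fin k → ℝ) (m : ℕ) : ℝ :=
  (List.insertionSort (· ≤ ·) (List.ofFn a)).getD (m - 1) 0

/-- The order statistic is the value of `a` at the index placed at position `m - 1` by the sorting
permutation. -/
lemma orderStat_eq_sort {k : ℕ} (a : Fin k → ℝ) (m : ℕ) (hm : m - 1 < k) :
    orderStat a m = a (Tuple.sort a ⟨m - 1, hm⟩) := by
  have h : List.insertionSort (· ≤ ·) (List.ofFn a) = List.ofFn (a ∘ Tuple.sort a) := by
    refine List.Perm.eq_of_pairwise' (r := (· ≤ ·)) (List.pairwise_insertionSort _ _) ?_ ?_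
    · exact (Tuple.monotone_sort a).sortedLE_ofFn.pairwise
    · exact (List.perm_insertionSort _ _).trans (Equiv.Perm.ofFn_comp_perm _ a).symm
  rw [orderStat, h, List.getD_eq_getElem _ _ (by simpa using hm)]
  simp

lemma exists_mem_le_orderStat {k m : ℕ} (a : Fin k → ℝ) (S : Finset (Fin k))
    (hm1 : 1 ≤ m) (hmk : m ≤ k) (hS : k < m + S.card) :
    ∃ i ∈ S, a i ≤ orderStat a m := by
  have hm : m - 1 < k := by omega
  rw [orderStat_eq_sort a m hm]
  by_contra! h
  -- Otherwise every index of `S` is sorted strictly after position `m - 1`: too few positions.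
  have hsub : S.map (Tuple.sort a).symm.toEmbedding ⊆ Finset.Ioi ⟨m - 1, hm⟩ := by
    intro j hj
    obtain ⟨i, hi, rfl⟩ := Finset.mem_map.1 hj
    rw [Finset.mem_Ioi]
    by_contra! hle
    have := Tuple.monotone_sort a hle
    simp only [Function.comp_apply, Equiv.coe_toEmbedding, Equiv.apply_symm_apply] at this
    exact absurd this (not_le.2 (h i hi))
  have hc := Finset.card_le_card hsub
  rw [Finset.card_map, Fin.card_Ioi] at hc
  simp only at hc
  omega

lemma exists_mem_orderStat_le {k m : ℕ} (a : Fin k → ℝ) (S : Finset (Fin k))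
    (hm1 : 1 ≤ m) (hmk : m ≤ k) (hS : m ≤ S.card) :
    ∃ i ∈ S, orderStat a m ≤ a i := by
  have hm : m - 1 < k := by omega
  rw [orderStat_eq_sort a m hm]
  by_contra! h
  -- Otherwise every index of `S` is sorted strictly before position `m - 1`: too few positions.
  have hsub : S.map (Tuple.sort a).symm.toEmbedding ⊆ Finset.Iio ⟨m - 1, hm⟩ := by
    intro j hj
    obtain ⟨i, hi, rfl⟩ := Finset.mem_map.1 hj
    rw [Finset.mem_Iio]
    by_contra! hle
    have := Tuple.monotone_sort a hle
    simp only [Function.comp_apply, Equiv.coe_toEmbedding, Equiv.apply_symm_apply] at this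
    exact absurd this (not_le.2 (h i hi))
  have hc := Finset.card_le_card hsub
  rw [Finset.card_map, Fin.card_Iio] at hc
  simp only at hc
  omega

/-- **Median distribution safety.** If `s > k/2`, `|S| = s` and the overlap `Δ(S)` is positive,
then `D := Σ_y d(y) ≥ Δ(S) > 0` where `d(y)` is the `⌈k/2⌉`-th smallest of the `p_i(y)`,
the median distribution `p_med = d/D` is a well-defined probability distribution, and
`p_med(U) ≤ (1/Δ(S)) · Σ_{i∈S} p_i(U)` for every `U ⊆ Y`. -/
theorem median_distribution_safety
    {Y : Type*} [Countable Y] [Nonempty Y]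
    (k s : ℕ) (hs1 : 1 ≤ s) (hsk : s ≤ k) (hmaj : k < 2 * s)
    (p : Fin k → Y → ℝ) (hp : ∀ i, IsDist (p i))
    (S : Finset (Fin k)) (hScard : S.card = s)
    (hΔ : 0 < overlap p S) :
    let d : Y → ℝ := fun y => orderStat (fun i => p i y) ((k + 1) / 2)
    let D : ℝ := ∑' y, d y
    overlap p S ≤ D ∧ 0 < D ∧
      (∀ y, 0 ≤ d y / D) ∧ HasSum (fun y => d y / D) 1 ∧
      ∀ U : Set Y, probOf (fun y => d y / D) U ≤ (1 / overlap p S) * ∑ i ∈ S, probOf (p i) U := by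
  intro d D
  have hm1 : 1 ≤ (k + 1) / 2 := by omega
  have hmk : (k + 1) / 2 ≤ k := by omega
  have hsum : ∀ i, Summable (p i) := fun i => (hp i).2.summable
  have hsumS : Summable fun y => ∑ i ∈ S, p i y := summable_sum fun i _ => hsum i
  have hinf_nonneg : ∀ y, 0 ≤ sInf {v : ℝ | ∃ i ∈ S, v = p i y} := fun y =>
    Real.sInf_nonneg (by rintro v ⟨i, -, rfl⟩; exact (hp i).1 y)
  have hinf_le : ∀ y, sInf {v : ℝ | ∃ i ∈ S, v = p i y} ≤ d y := by
    intro y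
    obtain ⟨i, hi, hle⟩ :=
      exists_mem_le_orderStat (fun i => p i y) S hm1 hmk (by omega)
    have hbdd : BddBelow {v : ℝ | ∃ i ∈ S, v = p i y} := by
      refine ⟨0, ?_⟩
      rintro v ⟨j, -, rfl⟩
      exact (hp j).1 y
    exact (csInf_le hbdd ⟨i, hi, rfl⟩).trans hle
  have hd_nonneg : ∀ y, 0 ≤ d y := fun y => (hinf_nonneg y).trans (hinf_le y)
  have hd_le : ∀ y, d y ≤ ∑ i ∈ S, p i y := by
    intro y
    obtain ⟨i, hi, hle⟩ :=
      exists_mem_orderStat_le (fun i => p i y) S hm1 hmk (by omega)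
    exact hle.trans (Finset.single_le_sum (f := fun i => p i y) (fun j _ => (hp j).1 y) hi)
  have hd_sum : Summable d := Summable.of_nonneg_of_le hd_nonneg hd_le hsumS
  have hΔD : overlap p S ≤ D :=
    (Summable.of_nonneg_of_le hinf_nonneg hinf_le hd_sum).tsum_le_tsum hinf_le hd_sum
  have hD : 0 < D := hΔ.trans_le hΔD
  refine ⟨hΔD, hD, fun y => div_nonneg (hd_nonneg y) hD.le, ?_, fun U => ?_⟩
  · have h := hd_sum.hasSum.div_const D
    rwa [show (∑' y, d y) / D = 1 from div_self hD.ne'] at h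
  · have hpU : ∀ i, Summable fun y : U => p i y := fun i => (hsum i).subtype U
    have hdU : Summable fun y : U => d y := hd_sum.subtype U
    have hSU : Summable fun y : U => ∑ i ∈ S, p i y := hsumS.subtype U
    have hU : ∑' y : U, d y ≤ ∑ i ∈ S, probOf (p i) U := by
      unfold probOf
      rw [← Summable.tsum_finsetSum fun i _ => hpU i]
      exact Summable.tsum_le_tsum (fun y : U => hd_le y) hdU hSU
    have hU0 : 0 ≤ ∑' y : U, d y := tsum_nonneg fun y => hd_nonneg y
    calc probOf (fun y => d y / D) U = (∑' y : U, d y) / D := tsum_div_const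
      _ ≤ (∑ i ∈ S, probOf (p i) U) / overlap p S :=
        div_le_div₀ (hU0.trans hU) hU hΔ hΔD
      _ = (1 / overlap p S) * ∑ i ∈ S, probOf (p i) U := by ring
end

section
/- Fix integers k ≥ s ≥ 1, probability distributions p_1, …, p_k on Y, and R ∈ ℕ, and let q_R be the consensus-sampling output distribution on Y ∪ {⊥}, given by q_R(⊥) = (1 − Z)^R and q_R(y) = (1 − (1 − Z)^R)·g(y)/Z for y ∈ Y when Z > 0, and by the point mass at ⊥ when Z = 0. Then q_R is R-robust relative to (p_1,…,p_k): for every subset U ⊆ Y, q_R(U) ≤ R · min over T ⊆ {1,…,k} with |T| = s of avg_T(U). -/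
/-! Write `q_R(y) = c * g y` with `c = (1 - (1 - Z) ^ R) / Z`. Bernoulli's inequality
`(1 - Z) ^ R ≥ 1 - R * Z` gives `c ≤ R`, and `g ≤ avg_T` pointwise for every `T` of size `s`.
Summing over `U` yields `q_R(U) ≤ R * ∑ y ∈ U, g y ≤ R * avg_T(U)` for every such `T`. The
pointwise bound (`gmin_le`) also supplies the summability of `g` and `Z ≤ 1`. -/

open scoped BigOperators

/-- `g(y) := min over T ⊆ {1,…,k} with |T| = s of avg_T(y)`, the average of the `s`
smallest of the `k` values `p_1(y), …, p_k(y)`. -/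
noncomputable def gmin {Y : Type*} {k : ℕ} (s : ℕ) (p : Fin k → Y → ℝ) (y : Y) : ℝ :=
  sInf {v : ℝ | ∃ T : Finset (Fin k), T.card = s ∧ v = (∑ i ∈ T, p i y) / s}

/-- The consensus-sampling output distribution on `Y ∪ {⊥}` (with `⊥ = none`):
`q_R(⊥) = (1 − Z)^R` and `q_R(y) = (1 − (1 − Z)^R)·g(y)/Z` when `Z > 0`, and the
point mass at `⊥` when `Z = 0`. -/
noncomputable def consensusOut {Y : Type*} (g : Y → ℝ) (Z : ℝ) (R : ℕ) : Option Y → ℝ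
  | none => (1 - Z) ^ R
  | some y => if 0 < Z then (1 - (1 - Z) ^ R) * g y / Z else 0

theorem gmin_nonneg {Y : Type*} {k : ℕ} (s : ℕ) (p : Fin k → Y → ℝ)
    (hp : ∀ i y, 0 ≤ p i y) (y : Y) : 0 ≤ gmin s p y := by
  apply Real.sInf_nonneg
  rintro v ⟨T, -, rfl⟩
  exact div_nonneg (Finset.sum_nonneg fun i _ => hp i y) (Nat.cast_nonneg s)

theorem gmin_le {Y : Type*} {k : ℕ} (p : Fin k → Y → ℝ)
    (hp : ∀ i y, 0 ≤ p i y) (T : Finset (Fin k)) (y : Y) :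
    gmin T.card p y ≤ (∑ i ∈ T, p i y) / T.card := by
  refine csInf_le ⟨0, ?_⟩ ⟨T, rfl, rfl⟩
  rintro v ⟨T', -, rfl⟩
  exact div_nonneg (Finset.sum_nonneg fun i _ => hp i y) (Nat.cast_nonneg _)

/-- **Consensus robustness.** The consensus-sampling output distribution `q_R` is `R`-robust:
for every `U ⊆ Y`, `q_R(U) ≤ R · min_{|T| = s} avg_T(U)`. -/
theorem consensus_robustness
    {Y : Type*} [Countable Y] [Nonempty Y]
    (k s : ℕ) (hs1 : 1 ≤ s) (hsk : s ≤ k)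
    (p : Fin k → Y → ℝ) (hp : ∀ i, IsDist (p i)) (R : ℕ) :
    ∀ U : Set Y,
      (∑' y : U, consensusOut (gmin s p) (∑' y', gmin s p y') R (some (y : Y)))
        ≤ (R : ℝ) *
          sInf {v : ℝ | ∃ T : Finset (Fin k), T.card = s ∧ v = (∑ i ∈ T, probOf (p i) U) / s} := by
  intro U
  have hp0 : ∀ i y, 0 ≤ p i y := fun i => (hp i).1
  have hg0 := gmin_nonneg s p hp0
  have hle : ∀ T : Finset (Fin k), T.card = s → ∀ y, gmin s p y ≤ (∑ i ∈ T, p i y) / s := by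
    rintro T rfl y
    exact gmin_le p hp0 T y
  obtain ⟨T₀, hT₀⟩ : ∃ T : Finset (Fin k), T.card = s := by
    obtain ⟨T, -, hT⟩ := Finset.exists_subset_card_eq
      (s := (Finset.univ : Finset (Fin k))) (n := s) (by simpa using hsk)
    exact ⟨T, hT⟩
  have hs : (0 : ℝ) < s := by exact_mod_cast hs1
  have havg : HasSum (fun y => (∑ i ∈ T₀, p i y) / (s : ℝ)) 1 := by
    have h := (hasSum_sum fun i (_ : i ∈ T₀) => (hp i).2).div_const (s : ℝ)
    simpa [hT₀, hs.ne'] using h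
  have hgs : Summable (gmin s p) := Summable.of_nonneg_of_le hg0 (hle T₀ hT₀) havg.summable
  have hgU : Summable fun y : U => gmin s p (y : Y) := hgs.subtype U
  have hZ1 : ∑' y, gmin s p y ≤ 1 := hasSum_le (hle T₀ hT₀) hgs.hasSum havg
  have hG0 : 0 ≤ ∑' y : U, gmin s p (y : Y) := tsum_nonneg fun y => hg0 y
  have hinf : ∑' y : U, gmin s p (y : Y) ≤
      sInf {v : ℝ | ∃ T : Finset (Fin k), T.card = s ∧ v = (∑ i ∈ T, probOf (p i) U) / s} := by
    refine le_csInf ⟨_, T₀, hT₀, rfl⟩ ?_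
    rintro v ⟨T, hT, rfl⟩
    have h : HasSum (fun y : U => (∑ i ∈ T, p i (y : Y)) / (s : ℝ))
        ((∑ i ∈ T, probOf (p i) U) / s) :=
      (hasSum_sum fun i (_ : i ∈ T) => ((hp i).2.summable.subtype U).hasSum).div_const (s : ℝ)
    exact hasSum_le (fun y : U => hle T hT (y : Y)) hgU.hasSum h
  refine le_trans ?_ (mul_le_mul_of_nonneg_left hinf (Nat.cast_nonneg R))
  generalize (∑' y, gmin s p y) = Z at hZ1
  by_cases hZ : 0 < Z
  · have hB : 1 - (1 - Z) ^ R ≤ R * Z := by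
      have h := one_add_mul_le_pow (a := -Z) (by linarith) R
      rw [← sub_eq_add_neg] at h
      linarith
    have hc : (1 - (1 - Z) ^ R) / Z ≤ R := (div_le_iff₀ hZ).2 hB
    simp only [consensusOut, if_pos hZ, mul_div_right_comm]
    rw [tsum_mul_left]
    exact mul_le_mul_of_nonneg_right hc hG0
  · simp only [consensusOut, if_neg hZ, tsum_zero]
    positivity
end

section
/- Fix integers k ≥ s ≥ 1 and probability distributions p_1, …, p_k on Y. For every J ⊆ {1,…,k} with |J| = k − s + 1, we have Z ≥ Δ(J)/s. -/
/-!
The inequality holds pointwise. If `|T| = s` and `|J| = k - s + 1`, then `|T| + |J| > k`, so `T` and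
`J` share an index `i`, and `min_{j ∈ J} p_j(y) ≤ p_i(y) ≤ ∑_{t ∈ T} p_t(y)`
(`sInf_le_sum_of_card`). Dividing by `s` and minimizing over `T` gives
`min_{j ∈ J} p_j(y) / s ≤ g(y)`. Both sides are nonnegative and `g` is dominated by the average of
any `s` of the distributions, so both series converge and the inequality can be summed over `y`.
-/

open scoped BigOperators

lemma bddBelow_values {Y : Type*} {k : ℕ} (p : Fin k → Y → ℝ) (hp : ∀ i, IsDist (p i))
    (J : Finset (Fin k)) (y : Y) : BddBelow {v : ℝ | ∃ i ∈ J, v = p i y} := by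
  refine ⟨0, ?_⟩
  rintro v ⟨i, -, rfl⟩
  exact (hp i).1 y

/-- An `s`-element set `T` meets every set `J` of `k - s + 1` indices, so the sum over `T` contains
one of the values minimized over `J`. -/
lemma sInf_le_sum_of_card {Y : Type*} {k s : ℕ} (hsk : s ≤ k)
    (p : Fin k → Y → ℝ) (hp : ∀ i, IsDist (p i)) {J T : Finset (Fin k)}
    (hJ : J.card = k - s + 1) (hT : T.card = s) (y : Y) :
    sInf {v : ℝ | ∃ i ∈ J, v = p i y} ≤ ∑ i ∈ T, p i y := by
  obtain ⟨i, hi⟩ : (T ∩ J).Nonempty := by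
    refine Finset.inter_nonempty_of_card_lt_card_add_card
      (Finset.subset_univ T) (Finset.subset_univ J) ?_
    rw [Finset.card_univ, Fintype.card_fin]
    omega
  rw [Finset.mem_inter] at hi
  exact (csInf_le (bddBelow_values p hp J y) ⟨i, hi.2, rfl⟩).trans
    (Finset.single_le_sum (f := fun t => p t y) (fun t _ => (hp t).1 y) hi.1)

/-- For every `J ⊆ {1,…,k}` with `|J| = k − s + 1`, we have `Z ≥ Δ(J)/s`. -/
theorem Z_ge_overlap_div_s
    {Y : Type*} [Countable Y] [Nonempty Y]
    (k s : ℕ) (hs1 : 1 ≤ s) (hsk : s ≤ k)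
    (p : Fin k → Y → ℝ) (hp : ∀ i, IsDist (p i))
    (J : Finset (Fin k)) (hJ : J.card = k - s + 1) :
    overlap p J / s ≤ ∑' y, gmin s p y := by
  obtain ⟨T₀, -, hT₀⟩ := Finset.exists_subset_card_eq
    (s := (Finset.univ : Finset (Fin k))) (n := s) (by simpa using hsk)
  have h_le : ∀ y, sInf {v : ℝ | ∃ i ∈ J, v = p i y} / s ≤ gmin s p y := by
    intro y
    refine le_csInf ⟨_, T₀, hT₀, rfl⟩ ?_
    rintro v ⟨T, hT, rfl⟩
    exact div_le_div_of_nonneg_right (sInf_le_sum_of_card hsk p hp hJ hT y) (Nat.cast_nonneg s)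
  have h_nonneg : ∀ y, 0 ≤ sInf {v : ℝ | ∃ i ∈ J, v = p i y} / s := by
    intro y
    refine div_nonneg (Real.sInf_nonneg ?_) (Nat.cast_nonneg s)
    rintro v ⟨i, -, rfl⟩
    exact (hp i).1 y
  have h_dom : ∀ y, gmin s p y ≤ (∑ i ∈ T₀, p i y) / s := by
    intro y
    refine csInf_le ⟨0, ?_⟩ ⟨T₀, hT₀, rfl⟩
    rintro v ⟨T, -, rfl⟩
    exact div_nonneg (Finset.sum_nonneg fun i _ => (hp i).1 y) (Nat.cast_nonneg s)
  have h_summable : Summable (gmin s p) :=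
    Summable.of_nonneg_of_le (fun y => (h_nonneg y).trans (h_le y)) h_dom
      ((summable_sum fun i _ => (hp i).2.summable).div_const _)
  rw [overlap, ← tsum_div_const]
  exact (Summable.of_nonneg_of_le h_nonneg h_le h_summable).tsum_le_tsum h_le h_summable
end

section
/- Let M be a countable set of messages with probability distribution μ, let p be a probability distribution on Y, and let R ≥ 0 be a real number. For each m ∈ M let q_m be a probability distribution on Y ∪ {⊥} that is R-risky relative to p, i.e., q_m(y) ≤ R·p(y) for every y ∈ Y. Let q̄ be the marginal distribution on Y ∪ {⊥} given by q̄(z) := Σ_{m∈M} μ(m)·q_m(z). Then, with entropies valued in [0,∞], H(q̄) ≤ log₂(R + 1) + Σ_{m∈M} μ(m)·H(q_m); equivalently, the mutual information I(Q;M) = H(q̄) − Σ_m μ(m)·H(q_m) between a message M ∼ μ and a sample Q ∼ q_M is at most log₂(R + 1). -/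
/-!
Write `Q` for the marginal and let `s` be the distribution `s ⊥ = 1/(R+1)`,
`s y = R * p y / (R+1)`; riskiness gives `q m z ≤ (R+1) * s z` for all `z`. Hence
the mutual information, when the entropies are finite, satisfies
`I = ∑ μ m * q m z * log (q m z / Q z) ≤ log (R+1) - D(Q ‖ s) ≤ log (R+1)`.

To avoid subtracting possibly infinite entropies, Gibbs' inequality is used termwise, in the form
`log (s / Q) ≤ s / Q - 1` (`pointwise_bound`). Everything is arranged so that all terms are
nonnegative, so the sums over `m` and `z` are taken in `[0,∞]`; the term `1 / log 2`
produced on both sides is finite and cancels at the end.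
-/

open scoped BigOperators ENNReal

/-- Shannon entropy (base 2) of a distribution `ρ` on a countable set, valued in `[0,∞]`,
with the convention `0·log₂ 0 = 0` (note `Real.logb 2 0 = 0` in Mathlib). -/
noncomputable def ent {α : Type*} (ρ : α → ℝ) : ℝ≥0∞ :=
  ∑' z, ENNReal.ofReal (-(ρ z * Real.logb 2 (ρ z)))

/-- The termwise Gibbs inequality, multiplied by `a`: here `a = q m z`, `Q` is the marginal at `z`
and `s` is the reference probability of `z`. -/
theorem pointwise_bound {a Q s R : ℝ} (ha : 0 ≤ a) (hQ : 0 < Q) (hR : 0 ≤ R)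
    (h : a ≤ (R + 1) * s) :
    a * ((Real.log 2)⁻¹ - Real.logb 2 Q) ≤
      -(a * Real.logb 2 a) + a * Real.logb 2 (R + 1) + a * (s / Q * (Real.log 2)⁻¹) := by
  rcases ha.eq_or_lt with rfl | ha
  · simp
  have hR1 : 0 < R + 1 := by linarith
  have hs : 0 < s := pos_of_mul_pos_right (ha.trans_le h) hR1.le
  have h1 : Real.log a ≤ Real.log (R + 1) + Real.log s := by
    rw [← Real.log_mul hR1.ne' hs.ne']
    exact Real.log_le_log ha h
  have h2 : Real.log s - Real.log Q ≤ s / Q - 1 := by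
    rw [← Real.log_div hs.ne' hQ.ne']
    exact Real.log_le_sub_one_of_pos (div_pos hs hQ)
  have hc : 0 < (Real.log 2)⁻¹ := inv_pos.2 (Real.log_pos one_lt_two)
  have h3 : 0 ≤ a * (Real.log 2)⁻¹ *
      (Real.log (R + 1) - Real.log a + s / Q - (1 - Real.log Q)) :=
    mul_nonneg (mul_pos ha hc).le (by linarith)
  simp only [Real.logb, div_eq_mul_inv] at h3 ⊢
  linarith

theorem IsDist.le_one {α : Type*} {ρ : α → ℝ} (h : IsDist ρ) (a : α) : ρ a ≤ 1 :=
  le_hasSum h.2 a fun b _ => h.1 b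

theorem IsDist.tsum_ofReal {α : Type*} {ρ : α → ℝ} (h : IsDist ρ) :
    ∑' a, ENNReal.ofReal (ρ a) = 1 := by
  rw [← ENNReal.ofReal_tsum_of_nonneg h.1 h.2.summable, h.2.tsum_eq, ENNReal.ofReal_one]

theorem tsum_option_ennreal {α : Type*} (f : Option α → ℝ≥0∞) :
    ∑' z, f z = f none + ∑' a, f (some a) := by
  rw [← (Equiv.optionEquivSumPUnit.{0} α).symm.tsum_eq f,
    ENNReal.summable.tsum_sum ENNReal.summable, add_comm]
  simp

/-- The bound at a single outcome `z`, averaged over the messages `m` in `[0,∞]`. -/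
theorem averaged_bound {M : Type*} {μ : M → ℝ} (hμ : IsDist μ) {a : M → ℝ}
    (ha : ∀ m, 0 ≤ a m) (ha1 : ∀ m, a m ≤ 1) {R s : ℝ} (hR : 0 ≤ R)
    (h : ∀ m, a m ≤ (R + 1) * s) {Q : ℝ} (hQ : HasSum (fun m => μ m * a m) Q) :
    ENNReal.ofReal (-(Q * Real.logb 2 Q)) + ENNReal.ofReal Q * ENNReal.ofReal (Real.log 2)⁻¹ ≤
      ∑' m, ENNReal.ofReal (μ m) * ENNReal.ofReal (-(a m * Real.logb 2 (a m)))
        + ENNReal.ofReal Q * ENNReal.ofReal (Real.logb 2 (R + 1))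
        + ENNReal.ofReal s * ENNReal.ofReal (Real.log 2)⁻¹ := by
  have hnn : ∀ m, 0 ≤ μ m * a m := fun m => mul_nonneg (hμ.1 m) (ha m)
  have hQ0 : 0 ≤ Q := hQ.nonneg hnn
  have hQ1 : Q ≤ 1 :=
    hasSum_le (fun m => mul_le_of_le_one_right (hμ.1 m) (ha1 m)) hQ hμ.2
  rcases hQ0.eq_or_lt with rfl | hQpos
  · simp
  have hc : 0 < (Real.log 2)⁻¹ := inv_pos.2 (Real.log_pos one_lt_two)
  have hlogQ : Real.logb 2 Q ≤ 0 := Real.logb_nonpos one_lt_two hQ0 hQ1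
  have hlogR : 0 ≤ Real.logb 2 (R + 1) := Real.logb_nonneg one_lt_two (by linarith)
  have hR1 : 0 < R + 1 := by linarith
  have hs : 0 ≤ s := by
    obtain ⟨m⟩ : Nonempty M := by
      by_contra hM
      rw [not_nonempty_iff] at hM
      exact hQpos.ne (hasSum_empty.unique hQ)
    exact nonneg_of_mul_nonneg_right ((ha m).trans (h m)) hR1
  -- A constant factor passes through the average over `m`.
  have key : ∀ k, 0 ≤ k →
      ∑' m, ENNReal.ofReal (μ m * a m * k) = ENNReal.ofReal (Q * k) := fun k hk => by
    rw [← ENNReal.ofReal_tsum_of_nonneg (fun m => mul_nonneg (hnn m) hk)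
      (hQ.mul_right k).summable, (hQ.mul_right k).tsum_eq]
  have hk : 0 ≤ s / Q * (Real.log 2)⁻¹ := by positivity
  have hterm : ∀ m, ENNReal.ofReal (μ m * a m * ((Real.log 2)⁻¹ - Real.logb 2 Q)) ≤
      ENNReal.ofReal (μ m) * ENNReal.ofReal (-(a m * Real.logb 2 (a m)))
        + ENNReal.ofReal (μ m * a m * Real.logb 2 (R + 1))
        + ENNReal.ofReal (μ m * a m * (s / Q * (Real.log 2)⁻¹)) := fun m => by
    have hη : 0 ≤ -(a m * Real.logb 2 (a m)) := neg_nonneg.2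
      (mul_nonpos_of_nonneg_of_nonpos (ha m) (Real.logb_nonpos one_lt_two (ha m) (ha1 m)))
    have hb := mul_le_mul_of_nonneg_left (pointwise_bound (ha m) hQpos hR (h m)) (hμ.1 m)
    rw [← ENNReal.ofReal_mul (hμ.1 m),
      ← ENNReal.ofReal_add (mul_nonneg (hμ.1 m) hη) (mul_nonneg (hnn m) hlogR),
      ← ENNReal.ofReal_add (add_nonneg (mul_nonneg (hμ.1 m) hη) (mul_nonneg (hnn m) hlogR))
        (mul_nonneg (hnn m) hk)]
    exact ENNReal.ofReal_le_ofReal (by linarith)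
  have hsum := ENNReal.tsum_le_tsum hterm
  rw [ENNReal.tsum_add, ENNReal.tsum_add, key _ (by linarith), key _ hlogR, key _ hk] at hsum
  have e1 : Q * ((Real.log 2)⁻¹ - Real.logb 2 Q) =
      -(Q * Real.logb 2 Q) + Q * (Real.log 2)⁻¹ := by ring
  have e2 : Q * (s / Q * (Real.log 2)⁻¹) = s * (Real.log 2)⁻¹ := by field_simp
  rw [e1, e2, ENNReal.ofReal_add (neg_nonneg.2 (mul_nonpos_of_nonneg_of_nonpos hQ0 hlogQ))
    (by positivity), ENNReal.ofReal_mul hQ0, ENNReal.ofReal_mul hQ0, ENNReal.ofReal_mul hs] at hsum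
  exact hsum

/-- **Mutual-information leakage bound.** If each `q_m` is `R`-risky relative to `p`, then
the entropy of the marginal `q̄(z) = Σ_m μ(m)·q_m(z)` satisfies
`H(q̄) ≤ log₂(R+1) + Σ_m μ(m)·H(q_m)`, i.e. the mutual information
`I(Q;M) = H(q̄) − Σ_m μ(m)·H(q_m)` is at most `log₂(R+1)`. -/
theorem mutual_information_leakage
    {Y M : Type*} [Countable Y] [Nonempty Y] [Countable M]
    (μ : M → ℝ) (hμ : IsDist μ)
    (p : Y → ℝ) (hp : IsDist p)
    (R : ℝ) (hR : 0 ≤ R)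
    (q : M → Option Y → ℝ) (hq : ∀ m, IsDist (q m))
    (hrisky : ∀ m y, q m (some y) ≤ R * p y) :
    ent (fun z : Option Y => ∑' m, μ m * q m z)
      ≤ ENNReal.ofReal (Real.logb 2 (R + 1)) + ∑' m, ENNReal.ofReal (μ m) * ent (q m) := by
  have hR1 : 0 < R + 1 := by linarith
  have hnn : ∀ z m, 0 ≤ μ m * q m z := fun z m => mul_nonneg (hμ.1 m) ((hq m).1 z)
  have hsumm : ∀ z, Summable fun m => μ m * q m z := fun z =>
    Summable.of_nonneg_of_le (hnn z)
      (fun m => mul_le_of_le_one_right (hμ.1 m) ((hq m).le_one z)) hμ.2.summable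
  set Q : Option Y → ℝ := fun z => ∑' m, μ m * q m z with hQdef
  let s : Option Y → ℝ := fun z => z.elim ((R + 1)⁻¹) fun y => (R + 1)⁻¹ * R * p y
  have hs : ∀ m z, q m z ≤ (R + 1) * s z := by
    rintro m (_ | y)
    · simpa [s, hR1.ne'] using (hq m).le_one none
    · simpa [s, mul_assoc, hR1.ne'] using hrisky m y
  have hQ1 : ∑' z, ENNReal.ofReal (Q z) = 1 := by
    simp only [hQdef]
    simp_rw [fun z => ENNReal.ofReal_tsum_of_nonneg (hnn z) (hsumm z),
      fun m z => ENNReal.ofReal_mul (q := q m z) (hμ.1 m)]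
    rw [ENNReal.tsum_comm]
    simp_rw [ENNReal.tsum_mul_left, (hq _).tsum_ofReal, mul_one]
    exact hμ.tsum_ofReal
  have hs1 : ∑' z, ENNReal.ofReal (s z) = 1 := by
    have hk : 0 ≤ (R + 1)⁻¹ * R := by positivity
    rw [tsum_option_ennreal]
    simp only [s, Option.elim]
    simp_rw [ENNReal.ofReal_mul hk, ENNReal.tsum_mul_left, hp.tsum_ofReal, mul_one]
    rw [← ENNReal.ofReal_add (by positivity) hk, ← ENNReal.ofReal_one]
    congr 1
    field_simp
    ring
  have h := ENNReal.tsum_le_tsum fun z =>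
    averaged_bound hμ (fun m => (hq m).1 z) (fun m => (hq m).le_one z) hR (fun m => hs m z)
      (hsumm z).hasSum
  rw [ENNReal.tsum_add, ENNReal.tsum_add, ENNReal.tsum_add, ENNReal.tsum_mul_right,
    ENNReal.tsum_mul_right, ENNReal.tsum_mul_right, hs1, hQ1, one_mul, one_mul,
    ENNReal.tsum_comm] at h
  simp_rw [ENNReal.tsum_mul_left] at h
  rw [add_comm (ENNReal.ofReal (Real.logb 2 (R + 1)))]
  exact (ENNReal.add_le_add_iff_right ENNReal.ofReal_ne_top).1 h
end
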